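/- The surface S₁ = {(z, z²z̄ + z z̄² + (1/3) z̄³) : z ∈ ℂ} ⊆ ℂ² is locally polynomially convex at the origin: there exists r > 0 such that S₁ ∩ B̄(0;r) is polynomially convex. -/

import Mathlib

open Complex ComplexConjugate

/-- The polynomially convex hull of a set `K ⊆ ℂ²`. -/
def polyHull2 (K : Set (ℂ × ℂ)) : Set (ℂ × ℂ) :=
  { z | ∀ p : MvPolynomial (Fin 2) ℂ,
      ‖MvPolynomial.eval (fun i => if i = 0 then z.1 else z.2) p‖ ≤
        sSup ((fun w : ℂ × ℂ =>
          ‖MvPolynomial.eval (fun i => if i = 0 then w.1 else w.2) p‖) '' K) }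

/-- A set `K ⊆ ℂ²` is polynomially convex if it equals its polynomially convex hull. -/
def PolyConvex2 (K : Set (ℂ × ℂ)) : Prop := polyHull2 K = K

/-- The closed Euclidean ball of radius `r` centred at the origin in `ℂ²`. -/
def eClosedBall (r : ℝ) : Set (ℂ × ℂ) := { z | ‖z.1‖ ^ 2 + ‖z.2‖ ^ 2 ≤ r ^ 2 }

/-- The open Euclidean ball of radius `r` centred at the origin in `ℂ²`. -/
def eOpenBall (r : ℝ) : Set (ℂ × ℂ) := { z | ‖z.1‖ ^ 2 + ‖z.2‖ ^ 2 < r ^ 2 }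

/-- The surface `S_t = {(z, z²z̄ + t z z̄² + (t²/3) z̄³) : z ∈ ℂ}`. -/
def Sset (t : ℝ) : Set (ℂ × ℂ) :=
  { zw | ∃ z : ℂ, zw = (z, z ^ 2 * conj z + (t : ℂ) * z * (conj z) ^ 2
      + ((t : ℂ) ^ 2 / 3) * (conj z) ^ 3) }

/-!
If polynomials are dense in `C(K)`, then evaluation at a point of the hull of `K` is bounded by the
sup norm on `K`, so it extends to a character of `C(K)`, which is evaluation at a point of `K`;
hence `K` is polynomially convex. On `S₁` the coordinates satisfy `3 w + z³ = (z + z̄)³`, so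
`(Re z)³` is a polynomial in `z` and `w`. As this cube is real-valued, its cube root `Re z` is a
uniform limit of polynomials by Weierstrass' theorem, hence so is `z̄ = 2 Re z - z`, and
Stone–Weierstrass gives the density on every compact subset of `S₁`.
-/

lemma ideal_map_subset_closure_image {A B F : Type*} [Semiring A] [Semiring B]
    [TopologicalSpace B] [IsTopologicalSemiring B] [FunLike F A B] [RingHomClass F A B] {Φ : F}
    (hΦ : DenseRange Φ) (I : Ideal A) : (I.map Φ : Set B) ⊆ closure (Φ '' I) := by
  intro f hf
  induction hf using Submodule.span_induction with
  | mem f hf => exact subset_closure hf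
  | zero => exact subset_closure ⟨0, I.zero_mem, map_zero Φ⟩
  | add f g _ _ hf hg =>
    refine map_mem_closure₂ continuous_add hf hg ?_
    rintro _ ⟨a, ha, rfl⟩ _ ⟨b, hb, rfl⟩
    exact ⟨a + b, I.add_mem ha hb, map_add Φ a b⟩
  | smul g f _ hf =>
    refine map_mem_closure₂ continuous_mul (hΦ g) hf ?_
    rintro _ ⟨a, rfl⟩ _ ⟨b, hb, rfl⟩
    exact ⟨a * b, I.mul_mem_left a hb, map_mul Φ a b⟩

lemma ideal_map_ker_ne_top {𝕜 A B : Type*} [NormedField 𝕜] [Ring A] [SeminormedRing B]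
    [Algebra 𝕜 A] [Algebra 𝕜 B] {Φ : A →ₐ[𝕜] B} (hΦ : DenseRange Φ) {χ : A →ₐ[𝕜] 𝕜}
    (hχ : ∀ a, ‖χ a‖ ≤ ‖Φ a‖) : (RingHom.ker χ).map Φ ≠ ⊤ := by
  intro htop
  have one_mem : 1 ∈ closure (Φ '' RingHom.ker χ) :=
    ideal_map_subset_closure_image hΦ _ (by simp [htop])
  obtain ⟨_, ⟨a, ha, rfl⟩, hdist⟩ := Metric.mem_closure_iff.mp one_mem 1 one_pos
  have hχa : χ (1 - a) = 1 := by rw [map_sub, map_one, RingHom.mem_ker.mp ha, sub_zero]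
  have hnorm := hχ (1 - a)
  rw [hχa, norm_one, map_sub, map_one, ← dist_eq_norm] at hnorm
  exact hdist.not_ge hnorm

lemma exists_forall_apply_eq_of_denseRange {X 𝕜 A : Type*} [TopologicalSpace X]
    [CompactSpace X] [T2Space X] [RCLike 𝕜] [Ring A] [Algebra 𝕜 A] {Φ : A →ₐ[𝕜] C(X, 𝕜)}
    (hΦ : DenseRange Φ) {χ : A →ₐ[𝕜] 𝕜} (hχ : ∀ a, ‖χ a‖ ≤ ‖Φ a‖) :
    ∃ x, ∀ a, Φ a x = χ a := by
  obtain ⟨M, hM, hle⟩ := Ideal.exists_le_maximal _ (ideal_map_ker_ne_top hΦ hχ)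
  obtain ⟨x, rfl⟩ := (ContinuousMap.ideal_isMaximal_iff M).mp hM
  refine ⟨x, fun a => ?_⟩
  have hker : a - algebraMap 𝕜 A (χ a) ∈ RingHom.ker χ := by simp [RingHom.mem_ker]
  have hvanish := (ContinuousMap.mem_idealOfSet_compl_singleton x _).mp
    (hle (Ideal.mem_map_of_mem Φ hker))
  simpa [sub_eq_zero] using hvanish

section ClosedSubalgebra

variable {X 𝕜 : Type*} [TopologicalSpace X] [RCLike 𝕜]

/-- The inclusion of the real-valued continuous functions into the `𝕜`-valued ones, used to say that
a subalgebra of `C(X, 𝕜)` contains a given real function. -/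
noncomputable def coeRealAlgHom (X 𝕜 : Type*) [TopologicalSpace X] [RCLike 𝕜] :
    C(X, ℝ) →ₐ[ℝ] C(X, 𝕜) :=
  RCLike.ofRealAm.compLeftContinuous ℝ RCLike.continuous_ofReal

@[simp]
lemma coeRealAlgHom_apply (u : C(X, ℝ)) (x : X) : coeRealAlgHom X 𝕜 u x = u x := rfl

lemma odd_pow_surjective {n : ℕ} (hn : Odd n) : Function.Surjective fun x : ℝ => x ^ n := by
  have hTop := Filter.tendsto_pow_atTop (α := ℝ) hn.pos.ne'
  have hBot : Filter.Tendsto (fun x : ℝ => x ^ n) .atBot .atBot := by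
    simpa only [Function.comp_def, hn.neg_pow, neg_neg] using
      Filter.tendsto_neg_atTop_atBot.comp (hTop.comp Filter.tendsto_neg_atBot_atTop)
  exact (continuous_pow n).surjective hTop hBot

/-- The homeomorphism `x ↦ x ^ n` of the real line for odd `n`; its inverse is the real `n`-th
root, which `Real.rpow` does not give at negative numbers. -/
noncomputable def oddPowHomeomorph {n : ℕ} (hn : Odd n) : ℝ ≃ₜ ℝ :=
  (hn.strictMono_pow.orderIsoOfSurjective _ (odd_pow_surjective hn)).toHomeomorph

lemma oddPowHomeomorph_symm_pow {n : ℕ} (hn : Odd n) (x : ℝ) :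
    (oddPowHomeomorph hn).symm (x ^ n) = x :=
  (oddPowHomeomorph hn).symm_apply_apply x

variable [CompactSpace X] {S : Subalgebra 𝕜 C(X, 𝕜)}

lemma coeRealAlgHom_comp_mem (hS : IsClosed (S : Set C(X, 𝕜))) {u : C(X, ℝ)}
    (hu : coeRealAlgHom X 𝕜 u ∈ S) (f : C(ℝ, ℝ)) : coeRealAlgHom X 𝕜 (f.comp u) ∈ S := by
  let R : Subalgebra ℝ C(X, ℝ) := (S.restrictScalars ℝ).comap (coeRealAlgHom X 𝕜)
  have hR : IsClosed (R : Set C(X, ℝ)) :=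
    hS.preimage (ContinuousMap.continuous_postcomp ⟨_, RCLike.continuous_ofReal⟩)
  exact R.topologicalClosure_minimal le_rfl hR <|
    ContinuousMap.comp_attachBound_mem_closure R ⟨u, hu⟩ (f.restrict _)

lemma coeRealAlgHom_mem_of_odd_pow_mem (hS : IsClosed (S : Set C(X, 𝕜))) {u : C(X, ℝ)} {n : ℕ}
    (hn : Odd n) (hu : coeRealAlgHom X 𝕜 u ^ n ∈ S) : coeRealAlgHom X 𝕜 u ∈ S := by
  rw [← map_pow] at hu
  convert! coeRealAlgHom_comp_mem hS hu (oddPowHomeomorph hn).symm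
  ext x
  exact (oddPowHomeomorph_symm_pow hn (u x)).symm

lemma eq_top_of_injective_of_star_mem (hS : IsClosed (S : Set C(X, 𝕜))) {z : C(X, 𝕜)}
    (hinj : Function.Injective z) (hz : z ∈ S) (hstar : star z ∈ S) : S = ⊤ := by
  let B : StarSubalgebra 𝕜 C(X, 𝕜) := StarAlgebra.adjoin 𝕜 {z}
  have hBS : B.toSubalgebra ≤ S :=
    Algebra.adjoin_le <| by simp [Set.star_singleton, Set.insert_subset_iff, hz, hstar]
  have hB : B.SeparatesPoints := fun x y hxy =>
    ⟨z, ⟨z, StarAlgebra.self_mem_adjoin_singleton 𝕜 z, rfl⟩, hinj.ne hxy⟩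
  have hdense := ContinuousMap.starSubalgebra_topologicalClosure_eq_top_of_separatesPoints B hB
  refine top_unique fun f _ => B.toSubalgebra.topologicalClosure_minimal hBS hS ?_
  exact (SetLike.ext_iff.mp hdense f).mpr trivial

lemma eq_top_of_injective_of_re_mem (hS : IsClosed (S : Set C(X, 𝕜))) {z : C(X, 𝕜)}
    (hinj : Function.Injective z) (hz : z ∈ S)
    (hre : coeRealAlgHom X 𝕜 ⟨fun x => RCLike.re (z x), by fun_prop⟩ ∈ S) : S = ⊤ := by
  refine eq_top_of_injective_of_star_mem hS hinj hz ?_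
  convert! S.sub_mem (S.add_mem hre hre) hz using 1
  ext x
  simp [eq_sub_iff_add_eq', RCLike.add_conj, two_mul]

end ClosedSubalgebra

section PolynomialHull

/-- Evaluation of polynomials at a point of `ℂ²`, as a character of the polynomial algebra; it
unfolds to the evaluation in `polyHull2`. -/
noncomputable def polyEval (w : ℂ × ℂ) : MvPolynomial (Fin 2) ℂ →ₐ[ℂ] ℂ :=
  MvPolynomial.aeval fun i => if i = 0 then w.1 else w.2

/-- Restriction of polynomials to a subset `K` of `ℂ²`; its range is dense exactly when
`P(K) = C(K)`. -/
noncomputable def polyRestrict (K : Set (ℂ × ℂ)) : MvPolynomial (Fin 2) ℂ →ₐ[ℂ] C(K, ℂ) :=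
  MvPolynomial.aeval fun i =>
    if i = 0 then ⟨fun w => w.1.1, by fun_prop⟩ else ⟨fun w => w.1.2, by fun_prop⟩

variable {K : Set (ℂ × ℂ)}

lemma polyRestrict_apply (p : MvPolynomial (Fin 2) ℂ) (w : K) :
    polyRestrict K p w = polyEval w p := by
  have hcomp : (ContinuousMap.evalAlgHom ℂ ℂ w).comp (polyRestrict K) = polyEval w := by
    ext i
    fin_cases i <;> simp [polyRestrict, polyEval]
  exact DFunLike.congr_fun hcomp p

variable [CompactSpace K]

lemma norm_polyEval_le_norm_polyRestrict {w : ℂ × ℂ} (hw : w ∈ K)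
    (p : MvPolynomial (Fin 2) ℂ) : ‖polyEval w p‖ ≤ ‖polyRestrict K p‖ :=
  (polyRestrict_apply p ⟨w, hw⟩).symm ▸ (polyRestrict K p).norm_coe_le_norm ⟨w, hw⟩

lemma norm_polyEval_le_of_mem_polyHull2 {a : ℂ × ℂ} (ha : a ∈ polyHull2 K)
    (p : MvPolynomial (Fin 2) ℂ) : ‖polyEval a p‖ ≤ ‖polyRestrict K p‖ :=
  (ha p).trans <| Real.sSup_le
    (Set.forall_mem_image.mpr fun _ hw => norm_polyEval_le_norm_polyRestrict hw p) (norm_nonneg _)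

lemma subset_polyHull2 : K ⊆ polyHull2 K := fun a ha p =>
  le_csSup ⟨‖polyRestrict K p‖, Set.forall_mem_image.mpr fun _ hw =>
    norm_polyEval_le_norm_polyRestrict hw p⟩ ⟨a, ha, rfl⟩

lemma polyConvex2_of_denseRange (hK : DenseRange (polyRestrict K)) : PolyConvex2 K := by
  refine subset_polyHull2.antisymm' fun a ha => ?_
  obtain ⟨w, hw⟩ :=
    exists_forall_apply_eq_of_denseRange hK (norm_polyEval_le_of_mem_polyHull2 ha)
  have heq (i : Fin 2) := (polyRestrict_apply _ w).symm.trans (hw (MvPolynomial.X i))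
  have hwa : (w : ℂ × ℂ) = a :=
    Prod.ext (by simpa [polyEval] using heq 0) (by simpa [polyEval] using heq 1)
  exact hwa ▸ w.2

end PolynomialHull

lemma mem_Sset_iff {t : ℝ} {p : ℂ × ℂ} :
    p ∈ Sset t ↔ p.2 = p.1 ^ 2 * conj p.1 + (t : ℂ) * p.1 * (conj p.1) ^ 2
      + ((t : ℂ) ^ 2 / 3) * (conj p.1) ^ 3 :=
  ⟨by rintro ⟨z, rfl⟩; rfl, fun h => ⟨p.1, Prod.ext rfl h⟩⟩

lemma isClosed_Sset (t : ℝ) : IsClosed (Sset t) := by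
  rw [Set.ext fun _ => mem_Sset_iff (t := t)]
  simp only [starRingEnd_apply]
  exact isClosed_eq continuous_snd (by fun_prop)

lemma injOn_fst_Sset (t : ℝ) : Set.InjOn Prod.fst (Sset t) := by
  rintro p hp q hq (h : p.1 = q.1)
  exact Prod.ext h (by rw [mem_Sset_iff.mp hp, mem_Sset_iff.mp hq, h])

lemma re_cube_eq_of_mem_Sset_one {p : ℂ × ℂ} (hp : p ∈ Sset 1) :
    (p.1.re : ℂ) ^ 3 = (3 * p.2 + p.1 ^ 3) / 8 := by
  rw [Complex.re_eq_add_conj, mem_Sset_iff.mp hp, ofReal_one]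
  ring

lemma isCompact_eClosedBall (r : ℝ) : IsCompact (eClosedBall r) := by
  refine (isCompact_closedBall (0 : ℂ × ℂ) |r|).of_isClosed_subset
    (isClosed_le (by fun_prop) continuous_const) fun p hp => ?_
  have hp : ‖p.1‖ ^ 2 + ‖p.2‖ ^ 2 ≤ r ^ 2 := hp
  rw [mem_closedBall_zero_iff, Prod.norm_def]
  exact max_le
    (abs_norm p.1 ▸ sq_le_sq.mp (by linarith [sq_nonneg ‖p.2‖]))
    (abs_norm p.2 ▸ sq_le_sq.mp (by linarith [sq_nonneg ‖p.1‖]))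

lemma denseRange_polyRestrict_of_subset_Sset_one {K : Set (ℂ × ℂ)} [CompactSpace K]
    (hK : K ⊆ Sset 1) : DenseRange (polyRestrict K) := by
  let S : Subalgebra ℂ C(K, ℂ) := (polyRestrict K).range.topologicalClosure
  have hS : IsClosed (S : Set C(K, ℂ)) := Subalgebra.isClosed_topologicalClosure _
  have range_le (p) : polyRestrict K p ∈ S := Subalgebra.le_topologicalClosure _ ⟨p, rfl⟩
  have fst_inj : Function.Injective (polyRestrict K (.X 0)) := fun v w h => by
    simp only [polyRestrict_apply, polyEval, MvPolynomial.aeval_X, if_true] at h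
    exact Subtype.ext (injOn_fst_Sset 1 (hK v.2) (hK w.2) h)
  have hre : coeRealAlgHom K ℂ ⟨fun w => RCLike.re (polyRestrict K (.X 0) w), by fun_prop⟩ ^ 3 =
      polyRestrict K (.C (1 / 8) * (3 * .X 1 + .X 0 ^ 3)) := by
    ext w
    simp [polyRestrict_apply, polyEval, re_cube_eq_of_mem_Sset_one (hK w.2), div_eq_inv_mul]
  have hre_mem := coeRealAlgHom_mem_of_odd_pow_mem hS (by decide : Odd 3) (hre ▸ range_le _)
  have htop : S = ⊤ := eq_top_of_injective_of_re_mem hS fst_inj (range_le _) hre_mem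
  exact fun f => (htop ▸ Algebra.mem_top : f ∈ S)

theorem stmt_6_general {K : Set (ℂ × ℂ)} (hK : IsCompact K) (hKS : K ⊆ Sset 1) :
    PolyConvex2 K :=
  have : CompactSpace K := isCompact_iff_compactSpace.mp hK
  polyConvex2_of_denseRange (denseRange_polyRestrict_of_subset_Sset_one hKS)

/-- the surface `S₁ = {(z, z²z̄ + z z̄² + (1/3) z̄³) : z ∈ ℂ}` is locally
polynomially convex at the origin. -/
theorem stmt_6 :
    ∃ r > (0 : ℝ), PolyConvex2 (Sset 1 ∩ eClosedBall r) :=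
  ⟨1, one_pos, stmt_6_general ((isCompact_eClosedBall 1).inter_left (isClosed_Sset 1))
    Set.inter_subset_left⟩
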